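/- arXiv:2310.09723 — 2 statements merged into one kernel-verified Lean document; each statement's English description precedes it below -/
import Mathlib

section
/- Let N ≥ 1, let S_T, S_F22 be N×N complex matrices, s_RT, s_F21 ∈ ℂ^N, S_M21, S_M22 ∈ ℂ, and suppose I − S_F22 S_T is invertible. Set S_eq = S_F11 + s_F12ᵀ S_T (I − S_F22 S_T)⁻¹ s_F21 and assume 1 − S_M22 S_eq ≠ 0. Suppose complex scalars a_T, a_F, b_F, b_RS and vectors a_A, b_A ∈ ℂ^N satisfy b_A = S_T a_A, b_F = S_F11 a_F + s_F12ᵀ b_A, a_A = s_F21 a_F + S_F22 b_A, a_F = S_M21 a_T + S_M22 b_F, and b_RS = s_RTᵀ a_A. Then b_RS = H_SISO · a_T, where H_SISO = s_RTᵀ (I − S_F22 S_T)⁻¹ s_F21 · S_M21 / (1 − S_M22 S_eq). -/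
open Matrix

/-! Eliminating `b_A` from the array and beamforming equations gives
`(I − S_F22 S_T) a_A = a_F s_F21`, hence `a_A = a_F (I − S_F22 S_T)⁻¹ s_F21`. Substituting this
in the equation for `b_F` gives `b_F = S_eq a_F`, so the matching-network equation becomes
`(1 − S_M22 S_eq) a_F = S_M21 a_T`, and the claim follows from `b_RS = s_RTᵀ a_A`. -/

/-- The equivalent SISO channel of a MISO transmitter: under the
port equations of the matching network, analog beamforming network and antenna
array, the received wave satisfies `b_RS = H_SISO · a_T` with
`H_SISO = s_RTᵀ (I − S_F22 S_T)⁻¹ s_F21 · S_M21 / (1 − S_M22 S_eq)`. -/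
theorem equivalent_SISO_channel
    {N : ℕ} (hN : 1 ≤ N)
    (S_T S_F22 : Matrix (Fin N) (Fin N) ℂ)
    (s_RT s_F21 s_F12 : Fin N → ℂ)
    (S_F11 S_M21 S_M22 : ℂ)
    (hinv : IsUnit (1 - S_F22 * S_T))
    (S_eq : ℂ)
    (hSeq : S_eq = S_F11 + s_F12 ⬝ᵥ (S_T *ᵥ ((1 - S_F22 * S_T)⁻¹ *ᵥ s_F21)))
    (hden : 1 - S_M22 * S_eq ≠ 0)
    (a_T a_F b_F b_RS : ℂ) (a_A b_A : Fin N → ℂ)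
    (h1 : b_A = S_T *ᵥ a_A)
    (h2 : b_F = S_F11 * a_F + s_F12 ⬝ᵥ b_A)
    (h3 : a_A = a_F • s_F21 + S_F22 *ᵥ b_A)
    (h4 : a_F = S_M21 * a_T + S_M22 * b_F)
    (h5 : b_RS = s_RT ⬝ᵥ a_A) :
    b_RS = (s_RT ⬝ᵥ ((1 - S_F22 * S_T)⁻¹ *ᵥ s_F21)) * S_M21 / (1 - S_M22 * S_eq) * a_T := by
  have hdet : IsUnit (1 - S_F22 * S_T).det := (Matrix.isUnit_iff_isUnit_det _).mp hinv
  -- Eliminating `b_A` leaves a linear system for the wave incident on the array.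
  have hsys : (1 - S_F22 * S_T) *ᵥ a_A = a_F • s_F21 := by
    rw [Matrix.sub_mulVec, Matrix.one_mulVec, ← Matrix.mulVec_mulVec, ← h1, sub_eq_iff_eq_add]
    exact h3
  have haA : a_A = a_F • ((1 - S_F22 * S_T)⁻¹ *ᵥ s_F21) := by
    rw [← Matrix.mulVec_smul, ← hsys, Matrix.mulVec_mulVec, Matrix.nonsing_inv_mul _ hdet,
      Matrix.one_mulVec]
  -- Seen from the matching network, the rest of the transmitter is the one-port load `S_eq`.
  have hbF : b_F = S_eq * a_F := by
    rw [h2, h1, hSeq, haA, Matrix.mulVec_smul, dotProduct_smul, smul_eq_mul]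
    ring
  have haF : (1 - S_M22 * S_eq) * a_F = S_M21 * a_T := by
    rw [hbF] at h4
    linear_combination h4
  rw [h5, haA, dotProduct_smul, smul_eq_mul, div_mul_eq_mul_div, eq_div_iff hden]
  linear_combination (s_RT ⬝ᵥ ((1 - S_F22 * S_T)⁻¹ *ᵥ s_F21)) * haF
end

section
/- Let S > 0 and λ > 0 be real numbers and define t* = max(0, (1 − λ/S)/(1 + λ)). Then 0 ≤ t* < 1 and for every t ∈ [0, 1), log(1 + S·t) + λ·log(1 − t) ≤ log(1 + S·t*) + λ·log(1 − t*). -/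
/-!
The integrand is concave, so it lies below its tangent line at `t*`, and it suffices that the slope
`S / (1 + S t*) - λ / (1 - t*)` times `t - t*` is nonpositive. The sign of the slope is that of
`S - λ - S (1 + λ) t*`, which vanishes when `t*` is interior and is nonpositive when `t* = 0`.
The tangent bound is `log_le_log_add_tangent`, applied to each logarithm.
-/

/-- The concave function `log` lies below its tangent line at `b`. -/
lemma log_le_log_add_tangent {a b : ℝ} (ha : 0 < a) (hb : 0 < b) :
    Real.log a ≤ Real.log b + (a - b) / b := by
  have h := Real.log_le_sub_one_of_pos (div_pos ha hb)
  rw [Real.log_div ha.ne' hb.ne'] at h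
  have h2 : (a - b) / b = a / b - 1 := by field_simp
  linarith

/-- The waterfilling point `t* = [(1 − λ/S)/(1 + λ)]⁺` lies in
`[0,1)` and maximizes the concave per-frequency Lagrangian integrand
`t ↦ log(1 + S t) + λ log(1 − t)` over `t ∈ [0,1)`. -/
theorem waterfilling_maximizes_pointwise_lagrangian
    (S lam : ℝ) (hS : 0 < S) (hlam : 0 < lam)
    (tstar : ℝ) (htstar : tstar = max 0 ((1 - lam / S) / (1 + lam))) :
    (0 ≤ tstar ∧ tstar < 1) ∧
    ∀ t : ℝ, 0 ≤ t → t < 1 →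
      Real.log (1 + S * t) + lam * Real.log (1 - t) ≤
        Real.log (1 + S * tstar) + lam * Real.log (1 - tstar) := by
  have h0 : 0 ≤ tstar := htstar ▸ le_max_left _ _
  have h1 : tstar < 1 := by
    rw [htstar, max_lt_iff, div_lt_one (by positivity)]
    have := div_pos hlam hS
    exact ⟨one_pos, by linarith⟩
  refine ⟨⟨h0, h1⟩, fun t ht0 ht1 => ?_⟩
  have hA : 0 < 1 + S * tstar := by positivity
  have hB : 0 < 1 - tstar := by linarith
  -- First-order optimality of `tstar`, with the denominators of the slope cleared.
  have key : (t - tstar) * (S * (1 - tstar) - lam * (1 + S * tstar)) ≤ 0 := by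
    rcases le_total ((1 - lam / S) / (1 + lam)) 0 with h | h
    · rw [max_eq_left h] at htstar
      have h' : 1 - lam / S ≤ 0 := by
        by_contra! hc
        exact absurd (div_pos hc (by positivity : 0 < 1 + lam)) (not_lt.mpr h)
      have hSl : S ≤ lam := (one_le_div hS).mp (by linarith)
      subst htstar
      nlinarith
    · rw [max_eq_right h] at htstar
      have hz : S * (1 - tstar) - lam * (1 + S * tstar) = 0 := by
        rw [htstar]
        field_simp
        ring
      rw [hz, mul_zero]
  have e1 := log_le_log_add_tangent (a := 1 + S * t) (by positivity) hA
  have e2 := mul_le_mul_of_nonneg_left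
    (log_le_log_add_tangent (a := 1 - t) (by linarith) hB) hlam.le
  have e3 : (1 + S * t - (1 + S * tstar)) / (1 + S * tstar)
      + lam * ((1 - t - (1 - tstar)) / (1 - tstar))
      = (t - tstar) * (S * (1 - tstar) - lam * (1 + S * tstar))
        / ((1 + S * tstar) * (1 - tstar)) := by
    field_simp
    ring
  have e4 := div_nonpos_of_nonpos_of_nonneg key (mul_pos hA hB).le
  linarith
end
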